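/- arXiv:2104.04710 — 2 statements merged into one kernel-verified Lean document; each statement's English description precedes it below -/
import Mathlib

section
/- (Lemma 1, Lipschitz continuity of reservoir systems on graphs.) Let Ã be a symmetric N×N real matrix, W an H×H real matrix, V an F×H real matrix, and X an N×F real matrix. Then the reservoir map Φ : ℝ^{N×H} → ℝ^{N×H} defined by Φ(M) = tanh(Ã M W + X V) is Lipschitz continuous with respect to the Frobenius norm with Lipschitz constant K = ρ(Ã) · ‖W‖₂; that is, for all N×H real matrices H and Z, ‖Φ(H) − Φ(Z)‖_F ≤ ρ(Ã) · ‖W‖₂ · ‖H − Z‖_F. -/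
noncomputable def frobNorm {m n : Type*} [Fintype m] [Fintype n]
    (M : Matrix m n ℝ) : ℝ :=
  Real.sqrt (∑ i, ∑ j, (M i j) ^ 2)

noncomputable def specNorm {m n : ℕ} (M : Matrix (Fin m) (Fin n) ℝ) : ℝ :=
  ‖LinearMap.toContinuousLinearMap (Matrix.toEuclideanLin M)‖

noncomputable def specRad {n : ℕ} (A : Matrix (Fin n) (Fin n) ℝ)
    (hA : A.IsHermitian) : ℝ :=
  ⨆ i, |hA.eigenvalues i|

noncomputable def mtanh {m n : Type*} (M : Matrix m n ℝ) : Matrix m n ℝ :=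
  Matrix.of fun i j => Real.tanh (M i j)

noncomputable def resMap {N F Hd : ℕ} (Atil : Matrix (Fin N) (Fin N) ℝ)
    (W : Matrix (Fin Hd) (Fin Hd) ℝ) (V : Matrix (Fin F) (Fin Hd) ℝ)
    (X : Matrix (Fin N) (Fin F) ℝ) (M : Matrix (Fin N) (Fin Hd) ℝ) :
    Matrix (Fin N) (Fin Hd) ℝ :=
  mtanh (Atil * M * W + X * V)

open scoped Matrix.Norms.L2Operator in
lemma specNorm_le_specRad {n : ℕ} (A : Matrix (Fin n) (Fin n) ℝ) (hA : A.IsHermitian) :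
    specNorm A ≤ specRad A hA := by
  suffices hs : ‖A‖ ≤ ⨆ i, |hA.eigenvalues i| from hs
  have h := congrArg norm hA.spectral_theorem
  refine h.trans_le ?_
  rw [Unitary.conjStarAlgAut_apply, mul_assoc]
  rw [CStarRing.norm_coe_unitary_mul]
  rw [← Unitary.coe_star, CStarRing.norm_mul_coe_unitary, Matrix.l2_opNorm_diagonal]
  have hb : BddAbove (Set.range fun i => |hA.eigenvalues i|) := (Set.finite_range _).bddAbove
  refine (pi_norm_le_iff_of_nonneg (Real.iSup_nonneg fun i => abs_nonneg _)).2 fun i => ?_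
  simpa using le_ciSup hb i

open scoped Matrix.Norms.L2Operator in
lemma specNorm_transpose {n : ℕ} (A : Matrix (Fin n) (Fin n) ℝ) :
    specNorm A.transpose = specNorm A := by
  change ‖A.transpose‖ = ‖A‖
  rw [← Matrix.conjTranspose_eq_transpose_of_trivial, Matrix.l2_opNorm_conjTranspose]

lemma frobNorm_transpose {m n : ℕ} (A : Matrix (Fin m) (Fin n) ℝ) :
    frobNorm A.transpose = frobNorm A := by
  unfold frobNorm
  rw [Finset.sum_comm]
  rfl

open scoped Matrix.Norms.L2Operator in
lemma col_le {m : ℕ} (A : Matrix (Fin m) (Fin m) ℝ) (v : Fin m → ℝ) :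
    ∑ i, (A.mulVec v i) ^ 2 ≤ specNorm A ^ 2 * ∑ i, v i ^ 2 := by
  have h := Matrix.l2_opNorm_mulVec A (WithLp.toLp 2 v)
  have h2 := pow_le_pow_left₀ (norm_nonneg _) h 2
  rw [mul_pow, EuclideanSpace.norm_sq_eq, EuclideanSpace.norm_sq_eq] at h2
  change _ ≤ ‖A‖ ^ 2 * _
  simpa using h2

lemma frobNorm_mul_le {m n : ℕ} (A : Matrix (Fin m) (Fin m) ℝ) (M : Matrix (Fin m) (Fin n) ℝ) :
    frobNorm (A * M) ≤ specNorm A * frobNorm M := by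
  have h0 : 0 ≤ specNorm A := norm_nonneg _
  unfold frobNorm
  rw [← Real.sqrt_sq h0, ← Real.sqrt_mul (sq_nonneg _)]
  apply Real.sqrt_le_sqrt
  rw [Finset.sum_comm, Finset.sum_comm (f := fun i j => M i j ^ 2), Finset.mul_sum]
  exact Finset.sum_le_sum fun j _ => col_le A (fun i => M i j)

lemma frobNorm_mul_le_right {m n : ℕ} (M : Matrix (Fin m) (Fin n) ℝ)
    (A : Matrix (Fin n) (Fin n) ℝ) :
    frobNorm (M * A) ≤ specNorm A * frobNorm M := by
  rw [← frobNorm_transpose, Matrix.transpose_mul, ← specNorm_transpose A, ← frobNorm_transpose M]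
  exact frobNorm_mul_le _ _

lemma tanh_lip (x y : ℝ) : |Real.tanh x - Real.tanh y| ≤ |x - y| := by
  have hd : ∀ t : ℝ, HasDerivAt Real.tanh (1 / Real.cosh t ^ 2) t := by
    intro t
    have h := (Real.hasDerivAt_sinh t).div (Real.hasDerivAt_cosh t) (Real.cosh_pos t).ne'
    have e : Real.tanh = Real.sinh / Real.cosh := by
      ext z; simp [Real.tanh_eq_sinh_div_cosh]
    rw [e]
    have e2 : (1:ℝ) = Real.cosh t * Real.cosh t - Real.sinh t * Real.sinh t := by
      have := Real.cosh_sq t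
      linarith [sq (Real.cosh t), sq (Real.sinh t)]
    rw [← e2] at h
    exact h
  have h := Convex.norm_image_sub_le_of_norm_hasDerivWithin_le (f := Real.tanh) (C := 1)
    (fun t _ => (hd t).hasDerivWithinAt) (fun t _ => ?_) convex_univ
    (Set.mem_univ y) (Set.mem_univ x)
  · simpa using h
  · have h1 : 1 ≤ Real.cosh t ^ 2 := one_le_pow₀ (Real.one_le_cosh t)
    rw [Real.norm_of_nonneg (by positivity)]
    exact div_le_one_of_le₀ h1 (by positivity)

/-- Lemma 1: the reservoir map is Lipschitz with constant ρ(Ã)·‖W‖₂. -/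
theorem reservoir_map_lipschitz {N F Hd : ℕ}
    (Atil : Matrix (Fin N) (Fin N) ℝ) (hA : Atil.IsHermitian)
    (W : Matrix (Fin Hd) (Fin Hd) ℝ) (V : Matrix (Fin F) (Fin Hd) ℝ)
    (X : Matrix (Fin N) (Fin F) ℝ) :
    ∀ H Z : Matrix (Fin N) (Fin Hd) ℝ,
      frobNorm (resMap Atil W V X H - resMap Atil W V X Z)
        ≤ specRad Atil hA * specNorm W * frobNorm (H - Z) := by
  intro H Z
  have h1 : frobNorm (resMap Atil W V X H - resMap Atil W V X Z)
      ≤ frobNorm (Atil * (H - Z) * W) := by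
    have e : Atil * (H - Z) * W = (Atil * H * W + X * V) - (Atil * Z * W + X * V) := by
      rw [Matrix.mul_sub, Matrix.sub_mul]; abel
    rw [e]
    unfold frobNorm resMap mtanh
    refine Real.sqrt_le_sqrt (Finset.sum_le_sum fun i _ => Finset.sum_le_sum fun j _ => ?_)
    exact sq_le_sq.2 (tanh_lip _ _)
  have hW : 0 ≤ specNorm W := norm_nonneg _
  have hF : 0 ≤ frobNorm (H - Z) := Real.sqrt_nonneg _
  calc _ ≤ _ := h1
    _ ≤ specNorm W * frobNorm (Atil * (H - Z)) := frobNorm_mul_le_right _ _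
    _ ≤ specNorm W * (specNorm Atil * frobNorm (H - Z)) := by
        gcongr; exact frobNorm_mul_le _ _
    _ ≤ specNorm W * (specRad Atil hA * frobNorm (H - Z)) := by
        gcongr; exact specNorm_le_specRad _ _
    _ = _ := by ring
end

section
/- (Corollary 1, number of iterations is increasing in the spectral radius.) Fix real numbers c > 0 (playing the role of ‖W‖₂), ε > 0, and h > 0 (playing the role of ‖tanh(X V)‖_F) with ε ≤ h, and define g(r) = (ln ε + ln(1 − r c) − ln h) / ln(r c) for r with 0 < r c < 1. Then g is strictly increasing on this domain: for all r₁, r₂ with 0 < r₁ < r₂ and r₂ c < 1, g(r₁) < g(r₂). In particular, keeping the reservoir weight matrices and the graph input features fixed, the number of iterations required for convergence in Theorem 1 is an increasing function of the spectral radius ρ(Ã) of the normalized adjacency matrix. -/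
/-- Corollary 1: the bound on the number of iterations
g(r) = (ln ε + ln(1 − r c) − ln h)/ln(r c) is strictly increasing in r
on the domain 0 < r c < 1. -/
theorem iteration_bound_strictMono (c ε h : ℝ)
    (hc : 0 < c) (hε : 0 < ε) (hh : 0 < h) (hεh : ε ≤ h)
    (r₁ r₂ : ℝ) (hr₁ : 0 < r₁) (hr₁₂ : r₁ < r₂) (hr₂ : r₂ * c < 1) :
    (Real.log ε + Real.log (1 - r₁ * c) - Real.log h) / Real.log (r₁ * c)
      < (Real.log ε + Real.log (1 - r₂ * c) - Real.log h) / Real.log (r₂ * c) := by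
  have h1 : 0 < r₁ * c := mul_pos hr₁ hc
  have h12 : r₁ * c < r₂ * c := mul_lt_mul_of_pos_right hr₁₂ hc
  have hl : Real.log ε ≤ Real.log h := Real.log_le_log hε hεh
  have hL1 : Real.log (r₁ * c) < Real.log (r₂ * c) := Real.log_lt_log h1 h12
  have hL2 : Real.log (r₂ * c) < 0 := Real.log_neg (h1.trans h12) hr₂
  have hN : Real.log (1 - r₂ * c) < Real.log (1 - r₁ * c) :=
    Real.log_lt_log (by linarith) (by linarith)
  have hN1 : Real.log (1 - r₁ * c) < 0 := Real.log_neg (by linarith) (by linarith)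
  rw [← neg_div_neg_eq, ← neg_div_neg_eq (Real.log ε + Real.log (1 - r₂ * c) - Real.log h)]
  rw [div_lt_div_iff₀ (by linarith) (by linarith)]
  exact mul_lt_mul'' (by linarith) (by linarith) (by linarith) (by linarith)
end
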